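/- For every natural number n ≥ 39 and every admissible multiplicity function m, the graph G(n,m) ∈ 𝒞(A_n) admits no minimal sum labeling: there is no function ℓ : V → ℕ with ℓ(v) ≥ 1 for all v ∈ V, satisfying that for all distinct u, v ∈ V, u and v are adjacent in G(n,m) if and only if there exists w ∈ V with ℓ(u)+ℓ(v) = ℓ(w), and such that ℓ(u) = 1 for some u ∈ V. -/

import Mathlib

/-- `Sn n = {2,3,…,n} ∪ {n+2}`. -/
def Sn (n : ℕ) : Set ℕ := {k | (2 ≤ k ∧ k ≤ n) ∨ k = n + 2}

/-- `m` is an admissible multiplicity function for `Sn n`. -/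
def Admissible (n : ℕ) (m : ℕ → ℕ) : Prop :=
  (∀ i ∈ Sn n, 2 * i ∈ Sn n → 2 ≤ m i) ∧
  (∀ i ∈ Sn n, 2 * i ∉ Sn n → m i = 1) ∧
  (∀ i, i ∉ Sn n → m i = 0)

/-- The vertex set of `G(n,m)`: pairs `(i,j)` with `i ∈ Sn n` and `j < m i`. -/
def Vnm (n : ℕ) (m : ℕ → ℕ) : Set (ℕ × ℕ) := {p | p.1 ∈ Sn n ∧ p.2 < m p.1}

/-- Distinct vertices `u`, `v` of `G(n,m)` are adjacent iff `u.1 + v.1 ∈ Sn n`. -/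
def AdjG (n : ℕ) (u v : ℕ × ℕ) : Prop := u ≠ v ∧ u.1 + v.1 ∈ Sn n

/-- `psi m i` is the set of vertices induced by the integer `i`. -/
def psi (m : ℕ → ℕ) (i : ℕ) : Set (ℕ × ℕ) := {p | p.1 = i ∧ p.2 < m i}

/-- The set of proper terminals of a vertex `v` of `G(n,m)`. -/
def tau (n : ℕ) (m : ℕ → ℕ) (v : ℕ × ℕ) : Set (ℕ × ℕ) :=
  {w ∈ Vnm n m | w ≠ v ∧ v.1 + w.1 ∉ Sn n}

/-- A (possibly non-injective) sum labeling of the graph `G(n,m)`. -/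
def IsSumLabelingG (n : ℕ) (m : ℕ → ℕ) (ℓ : ℕ × ℕ → ℕ) : Prop :=
  (∀ v ∈ Vnm n m, 1 ≤ ℓ v) ∧
  ∀ u ∈ Vnm n m, ∀ v ∈ Vnm n m, u ≠ v →
    (AdjG n u v ↔ ∃ w ∈ Vnm n m, ℓ u + ℓ v = ℓ w)

/-- If translating by `a` leads out of `D` only from `T`, then every element of the finite set `D`
reaches an element of `T` by repeated translation. -/
theorem exists_terminal {D T : Finset ℕ} {a : ℕ} (ha : 0 < a)
    (h : ∀ z ∈ D, z + a ∈ D ∨ z ∈ T) {z : ℕ} (hz : z ∈ D) :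
    ∃ t ∈ T, z ≤ t ∧ t ≡ z [MOD a] := by
  induction hk : D.sup id - z using Nat.strong_induction_on generalizing z with
  | _ k ih =>
    rcases h z hz with h1 | h1
    · have hle : z + a ≤ D.sup id := Finset.le_sup (f := id) h1
      obtain ⟨t, ht, hle', hmod⟩ := ih (D.sup id - (z + a)) (by omega) h1 rfl
      exact ⟨t, ht, by omega, hmod.trans (by simp [Nat.ModEq])⟩
    · exact ⟨z, h1, le_rfl, rfl⟩

/-- If `D` is large compared with `S`, it contains a progression of difference `a` and `k + 1` terms,
provided that translating by `a` leads out of `D` only from `S`. -/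
theorem exists_progression {D S : Finset ℕ} {a : ℕ} (h : ∀ z ∈ D, z + a ∈ D ∨ z ∈ S) (k : ℕ)
    (hcard : k * S.card < D.card) : ∃ z ∈ D, ∀ j ≤ k, z + j * a ∈ D := by
  let bad := (Finset.range k ×ˢ S).image fun q => q.2 - q.1 * a
  have hbad : bad.card < D.card :=
    lt_of_le_of_lt Finset.card_image_le (by simpa using hcard)
  obtain ⟨z, hz, hzb⟩ := Finset.exists_mem_notMem_of_card_lt_card hbad
  refine ⟨z, hz, fun j hj => ?_⟩
  induction j with
  | zero => simpa using hz
  | succ j ih =>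
    rcases h _ (ih (by omega)) with h1 | h1
    · rwa [Nat.succ_mul, ← add_assoc]
    · exact absurd (Finset.mem_image.2 ⟨(j, z + j * a), by simp [h1]; omega, by simp⟩) hzb

/-- Translation by `b` leads out of a large set from at least `b` points, if translation by some
`a` coprime to `b` leads out of it from few points only. -/
theorem le_card_terminals {D S T : Finset ℕ} {a b : ℕ} (hb : 0 < b) (hab : Nat.Coprime b a)
    (hS : ∀ z ∈ D, z + a ∈ D ∨ z ∈ S) (hT : ∀ z ∈ D, z + b ∈ D ∨ z ∈ T)
    (hcard : T.card * S.card < D.card) : b ≤ T.card := by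
  obtain ⟨z, -, hz⟩ := exists_progression hS T.card hcard
  have hterm : ∀ j, ∃ t, j ≤ T.card → t ∈ T ∧ t ≡ z + j * a [MOD b] := by
    intro j
    by_cases hj : j ≤ T.card
    · obtain ⟨t, ht, -, hmod⟩ := exists_terminal hb hT (hz j hj)
      exact ⟨t, fun _ => ⟨ht, hmod⟩⟩
    · exact ⟨0, fun h => absurd h hj⟩
  choose f hf using hterm
  obtain ⟨i, hi, j, hj, hij, hfij⟩ := Finset.exists_ne_map_eq_of_card_lt_of_maps_to
    (s := Finset.range (T.card + 1)) (t := T) (f := f) (by simp)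
    (fun j hj => (hf j (by simpa [Nat.lt_succ_iff] using hj)).1)
  rw [Finset.mem_range] at hi hj
  have hmod : z + i * a ≡ z + j * a [MOD b] :=
    ((hf i (by omega)).2.symm.trans (by rw [hfij])).trans (hf j (by omega)).2
  have hmod' : i ≡ j [MOD b] :=
    Nat.ModEq.cancel_right_of_coprime hab (Nat.ModEq.add_left_cancel' z hmod)
  by_contra hlt
  exact hij (hmod'.eq_of_lt_of_lt (by omega) (by omega))

/-- If no element of `D` other than `M` is terminal for both `a` and `b`, then all elements of `D`
are congruent to `M` modulo `gcd a b`. -/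
theorem modEq_gcd_of_terminals {D : Finset ℕ} {a b M : ℕ} (ha : 0 < a) (hb : 0 < b)
    (h : ∀ z ∈ D, z ≠ M → z + a ∈ D ∨ z + b ∈ D) {z : ℕ} (hz : z ∈ D) :
    z ≡ M [MOD Nat.gcd a b] := by
  have hadd : ∀ c, Nat.gcd a b ∣ c → z ≡ z + c [MOD Nat.gcd a b] := fun c hc => by
    simpa using Nat.ModEq.add_left z (Nat.modEq_zero_iff_dvd.2 hc).symm
  induction hk : D.sup id - z using Nat.strong_induction_on generalizing z with
  | _ k ih =>
    have key : ∀ c, 0 < c → Nat.gcd a b ∣ c → z + c ∈ D → z ≡ M [MOD Nat.gcd a b] := by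
      intro c hc hdvd hmem
      have hle : z + c ≤ D.sup id := Finset.le_sup (f := id) hmem
      refine (hadd c hdvd).trans (ih (D.sup id - (z + c)) (by omega) hmem (fun d hd => ?_) rfl)
      simpa using Nat.ModEq.add_left (z + c) (Nat.modEq_zero_iff_dvd.2 hd).symm
    by_cases hzM : z = M
    · rw [hzM]
    · rcases h z hz hzM with h1 | h1
      · exact key a ha (Nat.gcd_dvd_left a b) h1
      · exact key b hb (Nat.gcd_dvd_right a b) h1

/-- What a sum labeling says about the set `D` of all labels, the sets `A` and `B` of labels of the
classes `2` and `3`, and the labels `q`, `x`, `p`, `M` of the classes `n - 2`, `n - 1`, `n`,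
`n + 2`. -/
structure LabelPattern (D : Finset ℕ) (A B : Set ℕ) (q x p M : ℕ) : Prop where
  card_lt : 37 < D.card
  pos : ∀ z ∈ D, 1 ≤ z
  le_max : ∀ z ∈ D, z ≤ M
  mem_q : q ∈ D
  mem_x : x ∈ D
  mem_p : p ∈ D
  mem_M : M ∈ D
  q_ne_p : q ≠ p
  q_ne_x : q ≠ x
  q_ne_M : q ≠ M
  x_ne_p : x ≠ p
  x_ne_M : x ≠ M
  p_ne_M : p ≠ M
  A_subset : ∀ a ∈ A, a ∈ D ∧ a ∉ B ∧ a ≠ q ∧ a ≠ x ∧ a ≠ p ∧ a ≠ M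
  B_subset : ∀ b ∈ B, b ∈ D ∧ b ≠ q ∧ b ≠ x ∧ b ≠ p ∧ b ≠ M
  B_nonempty : B.Nonempty
  twins : ∃ a ∈ A, ∃ a' ∈ A, a + a' ∈ D
  add_A : ∀ a ∈ A, ∀ z ∈ D, z ≠ a → (z + a ∈ D ↔ z ≠ x ∧ z ≠ M)
  add_B : ∀ b ∈ B, ∀ z ∈ D, z ≠ b → (z + b ∈ D ↔ z ≠ q ∧ z ≠ p ∧ z ≠ M)
  add_x : ∀ z ∈ D, z ≠ x → (x + z ∈ D ↔ z ∈ B)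
  add_p : ∀ z ∈ D, z ≠ p → (p + z ∈ D ↔ z ∈ A)

namespace LabelPattern

variable {D : Finset ℕ} {A B : Set ℕ} {q x p M : ℕ}

theorem coprime (h : LabelPattern D A B q x p M) (h1 : 1 ∈ D) {a b : ℕ} (ha : a ∈ A)
    (hb : b ∈ B) : Nat.Coprime a b := by
  obtain ⟨haD, haB, haq, hax, hap, haM⟩ := h.A_subset a ha
  obtain ⟨hbD, hbq, hbx, hbp, hbM⟩ := h.B_subset b hb
  have hne : a ≠ b := fun hab => haB (hab ▸ hb)
  have key : ∀ z ∈ D, z ≡ M [MOD Nat.gcd a b] := fun z hz => by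
    refine modEq_gcd_of_terminals (h.pos a haD) (h.pos b hbD) (fun z hz hzM => ?_) hz
    by_cases hza : z = a
    · exact Or.inr ((h.add_B b hb z hz (by omega)).2 ⟨by omega, by omega, by omega⟩)
    · by_cases hzx : z = x
      · refine Or.inr ((h.add_B b hb z hz (by omega)).2 ⟨?_, ?_, hzM⟩)
        · rw [hzx]; exact h.q_ne_x.symm
        · rw [hzx]; exact h.x_ne_p
      · exact Or.inl ((h.add_A a ha z hz hza).2 ⟨hzx, hzM⟩)
  have h10 : 1 ≡ 0 [MOD Nat.gcd a b] := ((key 1 h1).trans (key a haD).symm).trans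
    (Nat.modEq_zero_iff_dvd.2 (Nat.gcd_dvd_left a b))
  exact Nat.dvd_one.1 (Nat.modEq_zero_iff_dvd.1 h10)

theorem le_two_and_le_three (h : LabelPattern D A B q x p M) (h1 : 1 ∈ D) {a b : ℕ} (ha : a ∈ A)
    (hb : b ∈ B) : a ≤ 2 ∧ b ≤ 3 := by
  have hco := h.coprime h1 ha hb
  have ha0 := h.pos a (h.A_subset a ha).1
  have hb0 := h.pos b (h.B_subset b hb).1
  have hcard := h.card_lt
  have hA : ∀ z ∈ D, z + a ∈ D ∨ z ∈ ({a, x, M} : Finset ℕ) := fun z hz => by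
    have := h.add_A a ha z hz
    simp only [Finset.mem_insert, Finset.mem_singleton]
    tauto
  have hB : ∀ z ∈ D, z + b ∈ D ∨ z ∈ ({b, q, p, M} : Finset ℕ) := fun z hz => by
    have := h.add_B b hb z hz
    simp only [Finset.mem_insert, Finset.mem_singleton]
    tauto
  have hcA : ({a, x, M} : Finset ℕ).card ≤ 3 := Finset.card_le_three
  have hcB : ({b, q, p, M} : Finset ℕ).card ≤ 4 := Finset.card_le_four
  have ha3 : a ≤ 3 := (le_card_terminals ha0 hco hB hA
    (by nlinarith [Nat.mul_le_mul hcA hcB])).trans hcA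
  have hb4 : b ≤ 4 := (le_card_terminals hb0 hco.symm hA hB
    (by nlinarith [Nat.mul_le_mul hcB hcA])).trans hcB
  let E := D.filter fun z => 4 < z
  have hEcard : 33 < E.card := by
    have hsplit := Finset.card_filter_add_card_filter_not (s := D) (fun z => 4 < z)
    have hsmall : (D.filter fun z => ¬ 4 < z).card ≤ (Finset.Icc 1 4).card := by
      refine Finset.card_le_card fun z hz => ?_
      rw [Finset.mem_filter] at hz
      have := h.pos z hz.1
      rw [Finset.mem_Icc]
      omega
    simp only [Nat.card_Icc] at hsmall
    change 33 < (D.filter fun z => 4 < z).card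
    omega
  have hA' : ∀ z ∈ E, z + a ∈ E ∨ z ∈ ({x, M} : Finset ℕ) := fun z hz => by
    rw [Finset.mem_filter] at hz
    have := h.add_A a ha z hz.1 (by omega)
    have hlt : 4 < z + a := by omega
    simp only [E, Finset.mem_filter, Finset.mem_insert, Finset.mem_singleton]
    tauto
  have hB' : ∀ z ∈ E, z + b ∈ E ∨ z ∈ ({q, p, M} : Finset ℕ) := fun z hz => by
    rw [Finset.mem_filter] at hz
    have := h.add_B b hb z hz.1 (by omega)
    have hlt : 4 < z + b := by omega
    simp only [E, Finset.mem_filter, Finset.mem_insert, Finset.mem_singleton]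
    tauto
  have hcA' : ({x, M} : Finset ℕ).card ≤ 2 := Finset.card_le_two
  have hcB' : ({q, p, M} : Finset ℕ).card ≤ 3 := Finset.card_le_three
  exact ⟨(le_card_terminals ha0 hco hB' hA' (by nlinarith [Nat.mul_le_mul hcA' hcB'])).trans hcA',
    (le_card_terminals hb0 hco.symm hA' hB' (by nlinarith [Nat.mul_le_mul hcB' hcA'])).trans hcB'⟩

theorem not_one_mem_and_two_mem (h : LabelPattern D A B q x p M) (h1 : 1 ∈ A) : 2 ∉ A := by
  intro h2
  have hcard := h.card_lt
  have hc : ({1, 2, x, M} : Finset ℕ).card ≤ 4 := Finset.card_le_four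
  have hne : (D \ {1, 2, x, M}).Nonempty := by
    rw [← Finset.card_pos]
    have := Finset.le_card_sdiff ({1, 2, x, M} : Finset ℕ) D
    omega
  obtain ⟨z, hz, hmax⟩ := Finset.exists_max_image _ id hne
  simp only [Finset.mem_sdiff, Finset.mem_insert, Finset.mem_singleton, not_or, id] at hz hmax
  obtain ⟨hzD, hz1, hz2, hzx, hzM⟩ := hz
  have hz0 := h.pos z hzD
  have e1 := (h.add_A 1 h1 z hzD hz1).2 ⟨hzx, hzM⟩
  have e2 := (h.add_A 2 h2 z hzD hz2).2 ⟨hzx, hzM⟩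
  have m1 := hmax (z + 1)
  have m2 := hmax (z + 2)
  have l2 := h.le_max _ e2
  have hxM := h.x_ne_M
  have hx1 := h.add_A 1 h1 x h.mem_x (h.A_subset 1 h1).2.2.2.1.symm
  have hx : x = z + 1 ∧ M = z + 2 := by
    have : z + 1 = x ∨ z + 1 = M := by
      by_contra hcon
      have := m1 ⟨e1, by omega, by omega, by omega, by omega⟩
      omega
    have : z + 2 = x ∨ z + 2 = M := by
      by_contra hcon
      have := m2 ⟨e2, by omega, by omega, by omega, by omega⟩
      omega
    omega
  have hMD := h.mem_M
  rw [hx.2] at hMD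
  rw [hx.1] at hx1
  exact (hx1.1 hMD).1 rfl

/-- The labels of class `2` all coincide, so that no exception is needed in `add_A`. -/
theorem exists_eq_singleton (h : LabelPattern D A B q x p M) (h1 : 1 ∈ D) :
    ∃ a, (a = 1 ∨ a = 2) ∧ A = {a} ∧ ∀ z ∈ D, (z + a ∈ D ↔ z ≠ x ∧ z ≠ M) := by
  obtain ⟨b, hb⟩ := h.B_nonempty
  obtain ⟨a, ha, a', ha', haa⟩ := h.twins
  have hval : ∀ c ∈ A, c = 1 ∨ c = 2 := fun c hc => by
    have := (h.le_two_and_le_three h1 hc hb).1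
    have := h.pos c (h.A_subset c hc).1
    omega
  have huniq : ∀ c ∈ A, c = a := fun c hc => by
    have hnot := h.not_one_mem_and_two_mem
    rcases hval c hc with rfl | rfl <;> rcases hval a ha with rfl | rfl
    · rfl
    · exact absurd ha (hnot hc)
    · exact absurd hc (hnot ha)
    · rfl
  refine ⟨a, hval a ha, Set.eq_singleton_iff_unique_mem.2 ⟨ha, huniq⟩, fun z hz => ?_⟩
  by_cases hza : z = a
  · obtain ⟨-, -, -, hax, -, haM⟩ := h.A_subset a ha
    rw [huniq a' ha'] at haa
    rw [hza]
    tauto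
  · exact h.add_A a ha z hz hza

theorem exists_mem_iff_of_one (h : LabelPattern D A B q x p M) (h1 : 1 ∈ D)
    (hT : ∀ z ∈ D, (z + 1 ∈ D ↔ z ≠ x ∧ z ≠ M)) :
    ∃ y, x + 2 ≤ y ∧ y ≤ M ∧ ∀ z, z ∈ D ↔ (1 ≤ z ∧ z ≤ x) ∨ (y ≤ z ∧ z ≤ M) := by
  have hxM := h.x_ne_M
  have hxle := h.le_max x h.mem_x
  have hlow : ∀ z, 1 ≤ z → z ≤ x → z ∈ D := by
    intro z hz
    induction z, hz using Nat.le_induction with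
    | base => exact fun _ => h1
    | succ z hz ih => exact fun hle => (hT z (ih (by omega))).2 ⟨by omega, by omega⟩
  have hex : ∃ y, y ∈ D ∧ x < y := ⟨M, h.mem_M, by omega⟩
  classical
  obtain ⟨hyD, hxy⟩ := Nat.find_spec hex
  have hymin : ∀ z ∈ D, x < z → Nat.find hex ≤ z := fun z hz hxz => Nat.find_min' hex ⟨hz, hxz⟩
  generalize Nat.find hex = y at hyD hxy hymin
  have hyx : y ≠ x + 1 := by
    rintro rfl
    exact ((hT x h.mem_x).1 hyD).1 rfl
  refine ⟨y, by omega, h.le_max y hyD, fun z => ⟨fun hz => ?_, ?_⟩⟩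
  · have := h.pos z hz
    have := h.le_max z hz
    have := hymin z hz
    omega
  · rintro (⟨hz1, hz2⟩ | ⟨hz1, hz2⟩)
    · exact hlow z hz1 hz2
    · induction z, hz1 using Nat.le_induction with
      | base => exact hyD
      | succ z hz ih => exact (hT z (ih (by omega))).2 ⟨by omega, by omega⟩

theorem mem_iff_of_two (h : LabelPattern D A B q x p M) (h1 : 1 ∈ D) (h2 : 2 ∈ D)
    (hT : ∀ z ∈ D, (z + 2 ∈ D ↔ z ≠ x ∧ z ≠ M)) :
    (x + 1) % 2 = M % 2 ∧
      ∀ z, z ∈ D ↔ 1 ≤ z ∧ ((z % 2 = x % 2 ∧ z ≤ x) ∨ (z % 2 = M % 2 ∧ z ≤ M)) := by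
  have hterm : ∀ z ∈ D, (z ≤ x ∧ x % 2 = z % 2) ∨ (z ≤ M ∧ M % 2 = z % 2) := fun z hz => by
    obtain ⟨t, ht, hle, hmod⟩ := exists_terminal (T := {x, M}) two_pos (fun z hz => by
      have := hT z hz
      simp only [Finset.mem_insert, Finset.mem_singleton]
      tauto) hz
    simp only [Finset.mem_insert, Finset.mem_singleton] at ht
    rcases ht with rfl | rfl
    · exact Or.inl ⟨hle, hmod⟩
    · exact Or.inr ⟨hle, hmod⟩
  have hpar : (x + 1) % 2 = M % 2 := by
    have := hterm 1 h1
    have := hterm 2 h2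
    omega
  refine ⟨hpar, fun z => ⟨fun hz => ?_, fun hz => ?_⟩⟩
  · have := h.pos z hz
    have := hterm z hz
    omega
  · induction z using Nat.strong_induction_on with
    | _ z ih =>
      by_cases hz1 : z = 1
      · rwa [hz1]
      by_cases hz2 : z = 2
      · rwa [hz2]
      have hmem := ih (z - 2) (by omega) (by omega)
      have := (hT _ hmem).2 ⟨by omega, by omega⟩
      rwa [show z - 2 + 2 = z by omega] at this

theorem A_ne_singleton_one (h : LabelPattern D A B q x p M) (h1 : 1 ∈ D)
    (hT : ∀ z ∈ D, (z + 1 ∈ D ↔ z ≠ x ∧ z ≠ M)) : A ≠ {1} := by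
  rintro rfl
  obtain ⟨y, hxy, hyM, hD⟩ := h.exists_mem_iff_of_one h1 hT
  have hB : ∀ b ∈ B, 2 ≤ b ∧ b ≤ 3 := fun b hb => by
    have := (h.le_two_and_le_three h1 rfl hb).2
    have hbD := h.pos b (h.B_subset b hb).1
    have hne : b ≠ 1 := fun hb1 => (h.A_subset 1 rfl).2.1 (hb1 ▸ hb)
    omega
  have hcard : 37 < x + (M + 1 - y) := by
    have hsub : D ⊆ Finset.Icc 1 x ∪ Finset.Icc y M := fun z hz => by
      simpa [Finset.mem_union, Finset.mem_Icc] using (hD z).1 hz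
    have hle := (Finset.card_le_card hsub).trans (Finset.card_union_le _ _)
    simp only [Nat.card_Icc] at hle
    have := h.card_lt
    omega
  have hx : ∀ z, z ∈ D → z ≠ x → x + z ∈ D → 2 ≤ z ∧ z ≤ 3 := fun z hz hzx hmem =>
    hB z ((h.add_x z hz hzx).1 hmem)
  have hp : ∀ z, z ∈ D → z ≠ p → p + z ∈ D → z = 1 := fun z hz hzp hmem =>
    (h.add_p z hz hzp).1 hmem
  have hpD := h.mem_p
  have hp1 : p + 1 ∈ D := (hT p h.mem_p).2 ⟨h.x_ne_p.symm, h.p_ne_M⟩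
  have hpx := h.x_ne_p
  have hpM := h.p_ne_M
  obtain ⟨b, hb⟩ := h.B_nonempty
  have hbx := (h.add_x b (h.B_subset b hb).1 (h.B_subset b hb).2.2.1).2 hb
  have hb23 := hB b hb
  have hterm : ∀ c ∈ B, ∀ z, z ∈ D → z ≠ c → z + c ∉ D → z = q ∨ z = p ∨ z = M :=
    fun c hc z hz hzc hn => by
      have := h.add_B c hc z hz hzc
      tauto
  have hmemB : ∀ z, z ∈ D → z ≠ x → x + z ∈ D → z ∈ B := fun z hz hzx => (h.add_x z hz hzx).1
  simp only [hD] at hx hp hpD hp1 hbx hterm hmemB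
  have hMx : M ≤ x + 3 := by
    have := hx (M - x)
    have := hx (x - 1)
    omega
  have hpM1 : p + 1 = M := by
    have := hp 2
    have := hp 3
    have := hp 4
    omega
  have hx3 : M = x + 3 ∧ y = x + 2 := by omega
  have t2 := hterm 2 (hmemB 2 (by omega) (by omega) (by omega)) (x - 1)
  have t3 := hterm 3 (hmemB 3 (by omega) (by omega) (by omega)) (x - 2)
  omega

theorem A_ne_singleton_two (h : LabelPattern D A B q x p M) (h1 : 1 ∈ D)
    (hT : ∀ z ∈ D, (z + 2 ∈ D ↔ z ≠ x ∧ z ≠ M)) : A ≠ {2} := by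
  rintro rfl
  obtain ⟨hpar, hD⟩ := h.mem_iff_of_two h1 (h.A_subset 2 rfl).1 hT
  have hcard : 36 < M := by
    have hsub : D ⊆ Finset.Icc 1 M := fun z hz =>
      Finset.mem_Icc.2 ⟨h.pos z hz, h.le_max z hz⟩
    have hle := Finset.card_le_card hsub
    simp only [Nat.card_Icc] at hle
    have := h.card_lt
    omega
  have hx : ∀ z, z ∈ D → z ≠ x → x + z ∈ D → z ≤ 3 := fun z hz hzx hmem =>
    (h.le_two_and_le_three h1 rfl ((h.add_x z hz hzx).1 hmem)).2
  have hp : ∀ z, z ∈ D → z ≠ p → p + z ∈ D → z = 2 := fun z hz hzp hmem =>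
    (h.add_p z hz hzp).1 hmem
  have hpD := h.mem_p
  have hp2 : p + 2 ∈ D := (hT p h.mem_p).2 ⟨h.x_ne_p.symm, h.p_ne_M⟩
  have hpx := h.x_ne_p
  have hpM := h.p_ne_M
  have hxM := h.le_max x h.mem_x
  have hqD := h.mem_q
  have hqp := h.q_ne_p
  have hqM := h.q_ne_M
  have hmemB : ∀ z, z ∈ D → z ≠ x → x + z ∈ D → z ∈ B := fun z hz hzx => (h.add_x z hz hzx).1
  have hterm : ∀ c ∈ B, ∀ z, z ∈ D → z ≠ c → z + c ∉ D → z = q ∨ z = p ∨ z = M :=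
    fun c hc z hz hzc hn => by
      have := h.add_B c hc z hz hzc
      tauto
  have hqterm : ∀ c ∈ B, q + c ∉ D := fun c hc hmem =>
    ((h.add_B c hc q h.mem_q (h.B_subset c hc).2.1.symm).1 hmem).1 rfl
  obtain ⟨b, hb⟩ := h.B_nonempty
  obtain ⟨hbD, -, hbx', -⟩ := h.B_subset b hb
  have hbx := (h.add_x b hbD hbx').2 hb
  have hb3 := (h.le_two_and_le_three h1 rfl hb).2
  simp only [hD] at hx hp hmemB hterm hqterm
  have hxlarge : 7 ≤ x := by
    by_contra hlt
    have hbodd : b % 2 = 1 := by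
      have := h.pos b hbD
      rw [hD] at hbx
      omega
    rcases Nat.mod_two_eq_zero_or_one x with hx0 | hx0
    · have t1 := hterm b hb 7 (by omega) (by omega) (by omega)
      have t2 := hterm b hb 9 (by omega) (by omega) (by omega)
      have t3 := hterm b hb 11 (by omega) (by omega) (by omega)
      have t4 := hterm b hb 13 (by omega) (by omega) (by omega)
      omega
    · have t1 := hterm b hb 8 (by omega) (by omega) (by omega)
      have t2 := hterm b hb 10 (by omega) (by omega) (by omega)
      have t3 := hterm b hb 12 (by omega) (by omega) (by omega)
      have t4 := hterm b hb 14 (by omega) (by omega) (by omega)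
      omega
  have hpar_p : p % 2 = M % 2 ∧ x < p ∧ p + 2 ≤ M := by
    have p1 := hp 1 (by omega)
    have p3 := hp 3 (by omega)
    rw [hD] at hpD hp2
    omega
  have hM : M = x + 3 := by
    have := hx 5 (by omega) (by omega)
    omega
  have hq1 := hqterm 1 (hmemB 1 (by omega) (by omega) (by omega))
  rw [hD] at hqD
  omega

theorem one_notMem (h : LabelPattern D A B q x p M) : 1 ∉ D := by
  intro h1
  obtain ⟨a, rfl | rfl, hA, hT⟩ := h.exists_eq_singleton h1
  · exact h.A_ne_singleton_one h1 hT hA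
  · exact h.A_ne_singleton_two h1 hT hA

end LabelPattern

section Labeling

variable {n : ℕ} {m : ℕ → ℕ} {ℓ : ℕ × ℕ → ℕ}

theorem mem_Vnm_zero (hm : Admissible n m) {i : ℕ} (hi : i ∈ Sn n) : (i, 0) ∈ Vnm n m := by
  refine ⟨hi, ?_⟩
  by_cases h2 : 2 * i ∈ Sn n
  · exact lt_of_lt_of_le two_pos (hm.1 i hi h2)
  · simp [hm.2.1 i hi h2]

theorem eq_zero_of_two_mul_notMem (hm : Admissible n m) {w : ℕ × ℕ} (hw : w ∈ Vnm n m)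
    (h2 : 2 * w.1 ∉ Sn n) : w = (w.1, 0) := by
  have := hw.2
  rw [hm.2.1 w.1 hw.1 h2] at this
  exact Prod.ext rfl (by omega)

/-- Every class contains a vertex different from any given `u`, unless its double is not in
`Sn n` and it is the class of `u`. -/
theorem exists_mem_Vnm_ne (hm : Admissible n m) {k : ℕ} (hk : k ∈ Sn n) (u : ℕ × ℕ)
    (h : u.1 = k → 2 * k ∈ Sn n) : ∃ w ∈ Vnm n m, w.1 = k ∧ w ≠ u := by
  by_cases hu : u = (k, 0)
  · have h2 := hm.1 k hk (h (by rw [hu]))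
    exact ⟨(k, 1), ⟨hk, h2⟩, rfl, by simp [hu]⟩
  · exact ⟨(k, 0), mem_Vnm_zero hm hk, rfl, Ne.symm hu⟩

theorem finite_Vnm : (Vnm n m).Finite := by
  refine ((Set.finite_Iic (n + 2)).biUnion fun i _ =>
    (Set.finite_singleton i).prod (Set.finite_Iio (m i))).subset fun w hw => ?_
  have := hw.1
  simp only [Sn, Set.mem_ofPred_eq] at this
  simp only [Set.mem_iUnion]
  exact ⟨w.1, by simp only [Set.mem_Iic]; omega, rfl, hw.2⟩

theorem add_mem_Sn_iff (hl : IsSumLabelingG n m ℓ) {u v : ℕ × ℕ} (hu : u ∈ Vnm n m)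
    (hv : v ∈ Vnm n m) (huv : u ≠ v) : u.1 + v.1 ∈ Sn n ↔ ℓ u + ℓ v ∈ ℓ '' Vnm n m := by
  have h := hl.2 u hu v hv huv
  rw [AdjG, and_iff_right huv] at h
  rw [h]
  exact ⟨fun ⟨w, hw, he⟩ => ⟨w, hw, he.symm⟩, fun ⟨w, hw, he⟩ => ⟨w, hw, he.symm⟩⟩

/-- Vertices with the same label belong to the same class. -/
theorem fst_eq_of_label_eq (hn : 5 ≤ n) (hm : Admissible n m) (hl : IsSumLabelingG n m ℓ)
    {u v : ℕ × ℕ} (hu : u ∈ Vnm n m) (hv : v ∈ Vnm n m) (huv : ℓ u = ℓ v) : u.1 = v.1 := by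
  wlog hlt : u.1 < v.1 generalizing u v
  · by_contra hne
    exact hne (this hv hu huv.symm (by omega)).symm
  exfalso
  have key : ∀ k, ¬ (k ∈ Sn n ∧ u.1 + k ∈ Sn n ∧ v.1 + k ∉ Sn n ∧ k ≠ v.1 ∧
      (u.1 ≠ k ∨ 2 * k ∈ Sn n)) := by
    rintro k ⟨hk, huk, hvk, hkv, h2⟩
    obtain ⟨w, hw, rfl, hwu⟩ := exists_mem_Vnm_ne hm hk u h2.neg_resolve_left
    have h1 := (add_mem_Sn_iff hl hu hw hwu.symm).1 huk
    rw [huv] at h1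
    exact hvk ((add_mem_Sn_iff hl hv hw fun hvw => hkv (by rw [hvw])).2 h1)
  have hu1 := hu.1
  have hv1 := hv.1
  have k1 := key (n + 2 - u.1)
  have k2 := key (n - u.1)
  have k3 := key (n - u.1 - 1)
  simp only [Sn, Set.mem_ofPred_eq] at *
  omega

theorem label_le (hm : Admissible n m) (hl : IsSumLabelingG n m ℓ) {w : ℕ × ℕ}
    (hw : w ∈ Vnm n m) : ℓ w ≤ ℓ (n + 2, 0) := by
  obtain ⟨u, hu, hmax⟩ := Set.exists_max_image (Vnm n m) ℓ finite_Vnm ⟨w, hw⟩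
  have hu1 : u.1 = n + 2 := by
    by_contra hne
    have hmem := hu.1
    obtain ⟨v, hv, hv1, hvu⟩ := exists_mem_Vnm_ne hm (k := n + 2 - u.1)
      (by simp only [Sn, Set.mem_ofPred_eq] at *; omega) u
      (by simp only [Sn, Set.mem_ofPred_eq] at *; omega)
    obtain ⟨t, ht, hsum⟩ := (add_mem_Sn_iff hl hu hv hvu.symm).1
      (by simp only [Sn, Set.mem_ofPred_eq] at *; omega)
    have := hmax t ht
    have := hl.1 v hv
    omega
  have hu0 := eq_zero_of_two_mul_notMem hm hu (by simp only [Sn, Set.mem_ofPred_eq]; omega)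
  rw [hu1] at hu0
  exact hu0 ▸ hmax w hw

theorem labelPattern (hn : 39 ≤ n) (hm : Admissible n m) (hl : IsSumLabelingG n m ℓ) :
    LabelPattern (finite_Vnm.image ℓ : (ℓ '' Vnm n m).Finite).toFinset
      (ℓ '' {w ∈ Vnm n m | w.1 = 2}) (ℓ '' {w ∈ Vnm n m | w.1 = 3})
      (ℓ (n - 2, 0)) (ℓ (n - 1, 0)) (ℓ (n, 0)) (ℓ (n + 2, 0)) := by
  have hS : ∀ i, i ∈ Sn n ↔ (2 ≤ i ∧ i ≤ n) ∨ i = n + 2 := fun i => Iff.rfl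
  have hV : ∀ i, (2 ≤ i ∧ i ≤ n) ∨ i = n + 2 → (i, 0) ∈ Vnm n m := fun i hi =>
    mem_Vnm_zero hm hi
  have hclass : ∀ {u v}, u ∈ Vnm n m → v ∈ Vnm n m → ℓ u = ℓ v → u.1 = v.1 := fun hu hv =>
    fst_eq_of_label_eq (by omega) hm hl hu hv
  have hq := hV (n - 2) (by omega)
  have hx := hV (n - 1) (by omega)
  have hp := hV n (by omega)
  have hM := hV (n + 2) (by omega)
  have hlabel : ∀ {w} i, w ∈ Vnm n m → (2 ≤ i ∧ i ≤ n) ∨ i = n + 2 → n + 2 < 2 * i →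
      (ℓ w = ℓ (i, 0) ↔ w.1 = i) := by
    intro w i hw hi hi2
    refine ⟨fun h => hclass hw (hV i hi) h, fun h => ?_⟩
    rw [eq_zero_of_two_mul_notMem hm hw (by rw [hS]; omega), h]
  have hne : ∀ {u v : ℕ × ℕ}, u ∈ Vnm n m → v ∈ Vnm n m → u.1 ≠ v.1 → ℓ u ≠ ℓ v :=
    fun hu hv huv h => huv (hclass hu hv h)
  have hsum : ∀ {u v : ℕ × ℕ}, u ∈ Vnm n m → v ∈ Vnm n m → ℓ u ≠ ℓ v →
      (ℓ u + ℓ v ∈ ℓ '' Vnm n m ↔ (2 ≤ u.1 + v.1 ∧ u.1 + v.1 ≤ n) ∨ u.1 + v.1 = n + 2) :=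
    fun hu hv huv => (add_mem_Sn_iff hl hu hv fun h => huv (by rw [h])).symm
  constructor
  case card_lt =>
    have hsub : (Finset.Icc 2 n).image (fun i => ℓ (i, 0)) ⊆
        (finite_Vnm.image ℓ : (ℓ '' Vnm n m).Finite).toFinset := by
      intro z hz
      obtain ⟨i, hi, rfl⟩ := Finset.mem_image.1 hz
      rw [Set.Finite.mem_toFinset]
      exact ⟨_, hV i (Or.inl (Finset.mem_Icc.1 hi)), rfl⟩
    have hle := Finset.card_le_card hsub
    rw [Finset.card_image_of_injOn, Nat.card_Icc] at hle
    · omega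
    · intro i hi j hj hij
      rw [Finset.mem_coe, Finset.mem_Icc] at hi hj
      exact hclass (hV i (Or.inl hi)) (hV j (Or.inl hj)) hij
  all_goals try simp only [Set.Finite.mem_toFinset]
  case pos => rintro _ ⟨w, hw, rfl⟩; exact hl.1 w hw
  case le_max => rintro _ ⟨w, hw, rfl⟩; exact label_le hm hl hw
  case mem_q => exact ⟨_, hq, rfl⟩
  case mem_x => exact ⟨_, hx, rfl⟩
  case mem_p => exact ⟨_, hp, rfl⟩
  case mem_M => exact ⟨_, hM, rfl⟩
  case q_ne_p => exact hne hq hp (by simp only; omega)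
  case q_ne_x => exact hne hq hx (by simp only; omega)
  case q_ne_M => exact hne hq hM (by simp only; omega)
  case x_ne_p => exact hne hx hp (by simp only; omega)
  case x_ne_M => exact hne hx hM (by simp only; omega)
  case p_ne_M => exact hne hp hM (by simp only; omega)
  case A_subset =>
    rintro _ ⟨w, ⟨hw, hw2⟩, rfl⟩
    refine ⟨⟨w, hw, rfl⟩, ?_, hne hw hq ?_, hne hw hx ?_, hne hw hp ?_, hne hw hM ?_⟩
    · rintro ⟨v, ⟨hv, hv3⟩, h⟩
      have := hclass hv hw h
      omega
    all_goals simp only; omega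
  case B_subset =>
    rintro _ ⟨w, ⟨hw, hw3⟩, rfl⟩
    refine ⟨⟨w, hw, rfl⟩, hne hw hq ?_, hne hw hx ?_, hne hw hp ?_, hne hw hM ?_⟩
    all_goals simp only; omega
  case B_nonempty => exact ⟨_, _, ⟨hV 3 (by omega), rfl⟩, rfl⟩
  case twins =>
    have h0 := hV 2 (by omega)
    obtain ⟨w, hw, hw2, hw0⟩ := exists_mem_Vnm_ne hm h0.1 (2, 0) (fun _ => by rw [hS]; omega)
    exact ⟨_, ⟨_, ⟨h0, rfl⟩, rfl⟩, _, ⟨w, ⟨hw, hw2⟩, rfl⟩,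
      (add_mem_Sn_iff hl h0 hw hw0.symm).1 (by rw [hS]; omega)⟩
  case add_A =>
    rintro _ ⟨v, ⟨hv, hv2⟩, rfl⟩ _ ⟨w, hw, rfl⟩ hwv
    have := (hS w.1).1 hw.1
    rw [hsum hw hv hwv, Ne, Ne, hlabel (n - 1) hw (by omega) (by omega),
      hlabel (n + 2) hw (by omega) (by omega)]
    omega
  case add_B =>
    rintro _ ⟨v, ⟨hv, hv3⟩, rfl⟩ _ ⟨w, hw, rfl⟩ hwv
    have := (hS w.1).1 hw.1
    rw [hsum hw hv hwv, Ne, Ne, Ne, hlabel (n - 2) hw (by omega) (by omega),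
      hlabel n hw (by omega) (by omega), hlabel (n + 2) hw (by omega) (by omega)]
    omega
  case add_x =>
    rintro _ ⟨w, hw, rfl⟩ hwx
    have := (hS w.1).1 hw.1
    rw [hsum hx hw hwx.symm]
    refine ⟨fun h => ⟨w, ⟨hw, by simp only at h; omega⟩, rfl⟩, ?_⟩
    rintro ⟨v, ⟨hv, hv3⟩, h⟩
    have := hclass hv hw h
    simp only
    omega
  case add_p =>
    rintro _ ⟨w, hw, rfl⟩ hwp
    have := (hS w.1).1 hw.1
    rw [hsum hp hw hwp.symm]
    refine ⟨fun h => ⟨w, ⟨hw, by simp only at h; omega⟩, rfl⟩, ?_⟩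
    rintro ⟨v, ⟨hv, hv2⟩, h⟩
    have := hclass hv hw h
    simp only
    omega

end Labeling

/-- For every `n ≥ 39` and every admissible multiplicity function `m`, the
graph `G(n,m) ∈ 𝒞(A_n)` admits no minimal sum labeling. -/
theorem no_minimal_labeling_CAn (n : ℕ) (hn : 39 ≤ n) (m : ℕ → ℕ)
    (hm : Admissible n m) :
    ¬ ∃ ℓ : ℕ × ℕ → ℕ, IsSumLabelingG n m ℓ ∧ ∃ u ∈ Vnm n m, ℓ u = 1 := by
  rintro ⟨ℓ, hl, u, hu, hu1⟩
  refine (labelPattern hn hm hl).one_notMem ?_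
  rw [Set.Finite.mem_toFinset]
  exact ⟨u, hu, hu1⟩
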